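/- arXiv:2102.03909 — 5 statements merged into one kernel-verified Lean document; each statement's English description precedes it below -/
import Mathlib

section
/- Let f : ℝ^P × X → ℝ be a parameterized scalar model such that for each x ∈ X the map θ ↦ f(θ, x) is continuously differentiable, let x_1, …, x_n ∈ X be data points and ℓ_1, …, ℓ_n : ℝ → ℝ be continuously differentiable per-example losses, and set E(θ) = (1/n) ∑_{i=1}^n ℓ_i(f(θ, x_i)). If θ : ℝ → ℝ^P is a differentiable curve satisfying θ'(t) = −∇E(θ(t)) for all t (a gradient flow of E), then for every x ∈ X the map t ↦ f(θ(t), x) is differentiable and its derivative satisfies d/dt f(θ(t), x) = −(1/n) ∑_{i=1}^n ℓ_i'(f(θ(t), x_i)) · Θ_{θ(t)}(x_i, x). (This is the empirical-loss form of Theorem 1: the function evolution induced by parameter-space gradient flow is the kernel gradient flow for the Neural Tangent Kernel.) -/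
open scoped RealInnerProductSpace

/-- **Theorem 1 (empirical-loss form).** If `θ` follows the gradient flow of the empirical
loss `E(θ) = (1/n) ∑ᵢ ℓᵢ(f(θ, xᵢ))` in parameter space, then for every input `x` the
function value `f(θ(t), x)` evolves according to the kernel gradient flow for the
empirical Neural Tangent Kernel `Θ_θ(x, x') = ⟪∇_θ f(θ, x), ∇_θ f(θ, x')⟫`. -/
theorem function_evolution_is_ntk_gradient_flow
    {P : ℕ} {X : Type*} (f : EuclideanSpace ℝ (Fin P) → X → ℝ)
    (hf : ∀ x : X, ContDiff ℝ 1 (fun θ => f θ x))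
    (n : ℕ) (hn : 0 < n) (x : Fin n → X) (ℓ : Fin n → ℝ → ℝ)
    (hℓ : ∀ i, ContDiff ℝ 1 (ℓ i))
    (E : EuclideanSpace ℝ (Fin P) → ℝ)
    (hE : E = fun θ => (1 / (n : ℝ)) * ∑ i, ℓ i (f θ (x i)))
    (θ : ℝ → EuclideanSpace ℝ (Fin P))
    (hθ : ∀ t : ℝ, HasDerivAt θ (-(gradient E (θ t))) t) :
    ∀ (x' : X) (t : ℝ),
      HasDerivAt (fun t => f (θ t) x')
        (-(1 / (n : ℝ)) * ∑ i, deriv (ℓ i) (f (θ t) (x i)) *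
          ⟪gradient (fun θ' => f θ' (x i)) (θ t),
           gradient (fun θ' => f θ' x') (θ t)⟫) t := by
  intro x' t
  have key : ∀ (g : EuclideanSpace ℝ (Fin P) → ℝ) (p v : EuclideanSpace ℝ (Fin P)),
      ⟪gradient g p, v⟫ = fderiv ℝ g p v := by
    intro g p v
    simp [gradient]
  have hd : ∀ y : X, HasFDerivAt (fun θ' => f θ' y) (fderiv ℝ (fun θ' => f θ' y) (θ t)) (θ t) :=
    fun y => (((hf y).differentiable one_ne_zero) (θ t)).hasFDerivAt
  have hl : ∀ i, HasFDerivAt (fun θ' => ℓ i (f θ' (x i)))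
      (deriv (ℓ i) (f (θ t) (x i)) • fderiv ℝ (fun θ' => f θ' (x i)) (θ t)) (θ t) := fun i =>
    (((hℓ i).differentiable one_ne_zero) (f (θ t) (x i))).hasDerivAt.comp_hasFDerivAt (θ t)
      (hd (x i))
  have hEd : HasFDerivAt E ((1 / (n : ℝ)) • ∑ i, deriv (ℓ i) (f (θ t) (x i)) •
      fderiv ℝ (fun θ' => f θ' (x i)) (θ t)) (θ t) := by
    rw [hE]
    exact (HasFDerivAt.fun_sum (fun i _ => hl i)).const_mul _
  have h := (hd x').comp_hasDerivAt t (hθ t)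
  refine HasDerivAt.congr_deriv h ?_
  rw [map_neg, ← key, real_inner_comm, key, hEd.fderiv]
  simp [key, ContinuousLinearMap.sum_apply]
end

section
/- Fix L ≥ 1, weight matrices W^1, …, W^{L+1} and perturbed weight matrices W̃^1, …, W̃^{L+1} of the same sizes, and real numbers s > 0 and ε ≥ 0 with ‖W^h‖₂ ≤ s and ‖W̃^h − W^h‖₂ ≤ ε for every h. Let x be an input row vector with ‖x‖ ≤ 1, let g^h(x) denote the layers of the ReLU network with weights W^1,…,W^{L+1} (with g^{L+1}(x) := f(x) the network output), and let g̃^h(x) denote the layers of the ReLU network with the perturbed weights W̃^1,…,W̃^{L+1}. Then for every h with 1 ≤ h ≤ L+1, ‖g̃^h(x) − g^h(x)‖ ≤ (s + ε)^h − s^h. (This is an exact-constant form of Lemma 1 on the perturbation of ReLU-network activations under weight perturbations.) -/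
/-- Euclidean norm of a finite real vector. -/
noncomputable def evnorm {n : ℕ} (v : Fin n → ℝ) : ℝ :=
  ‖(WithLp.equiv 2 (Fin n → ℝ)).symm v‖

/-- ℓ²-operator (spectral) norm of a real matrix. -/
noncomputable def specNorm {m n : ℕ} (A : Matrix (Fin m) (Fin n) ℝ) : ℝ :=
  ‖LinearMap.toContinuousLinearMap (Matrix.toEuclideanLin A)‖

/-- The layers of a ReLU network: `reluNet d W x 0 = x` and
`reluNet d W x (h+1) = σ(reluNet d W x h ⬝ W h)` (entrywise ReLU), where `W h` is the
weight matrix of layer `h+1` (so `W 0, …, W L` are the paper's `W^1, …, W^{L+1}`). -/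
noncomputable def reluNet (d : ℕ → ℕ)
    (W : ∀ h : ℕ, Matrix (Fin (d h)) (Fin (d (h + 1))) ℝ)
    (x : Fin (d 0) → ℝ) : ∀ h : ℕ, Fin (d h) → ℝ
  | 0 => x
  | h + 1 => fun i => max (Matrix.vecMul (reluNet d W x h) (W h) i) 0

open scoped Matrix.Norms.L2Operator in
lemma evnorm_vecMul_le {m n : ℕ} (v : Fin m → ℝ) (A : Matrix (Fin m) (Fin n) ℝ) :
    evnorm (Matrix.vecMul v A) ≤ specNorm A * evnorm v := by
  have h1 : specNorm A = ‖A‖ := rfl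
  have h2 : ‖A‖ = ‖A.transpose‖ := by
    rw [← Matrix.l2_opNorm_conjTranspose A, Matrix.conjTranspose_eq_transpose_of_trivial]
  rw [h1, h2, ← Matrix.mulVec_transpose]
  exact Matrix.l2_opNorm_mulVec A.transpose (WithLp.toLp 2 v)

lemma evnorm_nonneg' {n : ℕ} (v : Fin n → ℝ) : 0 ≤ evnorm v := norm_nonneg _

lemma evnorm_add_le {n : ℕ} (v w : Fin n → ℝ) : evnorm (v + w) ≤ evnorm v + evnorm w :=
  norm_add_le (WithLp.toLp 2 v) (WithLp.toLp 2 w)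

lemma evnorm_mono {n : ℕ} (v w : Fin n → ℝ) (h : ∀ i, |v i| ≤ |w i|) :
    evnorm v ≤ evnorm w := by
  unfold evnorm
  rw [EuclideanSpace.norm_eq, EuclideanSpace.norm_eq]
  apply Real.sqrt_le_sqrt
  apply Finset.sum_le_sum
  intro i _
  exact pow_le_pow_left₀ (norm_nonneg _) (h i) 2

lemma evnorm_step {m n : ℕ} (g g' : Fin m → ℝ) (A A' : Matrix (Fin m) (Fin n) ℝ)
    (s ε : ℝ) (hs : 0 < s) (hε : 0 ≤ ε) (hA : specNorm A ≤ s) (hA' : specNorm (A' - A) ≤ ε)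
    (h : ℕ) (hg : evnorm g ≤ s ^ h) (hd : evnorm (g' - g) ≤ (s + ε) ^ h - s ^ h) :
    evnorm (Matrix.vecMul g' A' - Matrix.vecMul g A) ≤ (s + ε) ^ (h + 1) - s ^ (h + 1) := by
  have e : Matrix.vecMul g' A' - Matrix.vecMul g A
      = (Matrix.vecMul (g' - g) A + Matrix.vecMul (g' - g) (A' - A))
        + Matrix.vecMul g (A' - A) := by
    simp only [Matrix.sub_vecMul, Matrix.vecMul_sub]
    abel
  rw [e]
  have t1 := evnorm_add_le (Matrix.vecMul (g' - g) A + Matrix.vecMul (g' - g) (A' - A))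
    (Matrix.vecMul g (A' - A))
  have t2 := evnorm_add_le (Matrix.vecMul (g' - g) A) (Matrix.vecMul (g' - g) (A' - A))
  have b1 := (evnorm_vecMul_le (g' - g) A).trans
    (mul_le_mul hA hd (evnorm_nonneg' _) hs.le)
  have b2 := (evnorm_vecMul_le (g' - g) (A' - A)).trans
    (mul_le_mul hA' hd (evnorm_nonneg' _) hε)
  have b3 := (evnorm_vecMul_le g (A' - A)).trans
    (mul_le_mul hA' hg (evnorm_nonneg' _) hε)
  rw [pow_succ, pow_succ]
  linarith

/-- **Lemma 1 (exact-constant form).** If every weight matrix has spectral norm at most `s`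
and every weight perturbation has spectral norm at most `ε`, and `‖x‖ ≤ 1`, then every
hidden activation of the perturbed ReLU network deviates from the unperturbed one by at
most `(s+ε)^h − s^h`, and the network outputs (`g^{L+1} = f`, the final linear layer)
deviate by at most `(s+ε)^{L+1} − s^{L+1}`. -/
theorem relu_net_perturbation_bound
    (L : ℕ) (hL : 1 ≤ L) (d : ℕ → ℕ)
    (W W' : ∀ h : ℕ, Matrix (Fin (d h)) (Fin (d (h + 1))) ℝ)
    (s ε : ℝ) (hs : 0 < s) (hε : 0 ≤ ε)
    (hW : ∀ h, h ≤ L → specNorm (W h) ≤ s)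
    (hW' : ∀ h, h ≤ L → specNorm (W' h - W h) ≤ ε)
    (x : Fin (d 0) → ℝ) (hx : evnorm x ≤ 1) :
    (∀ h, 1 ≤ h → h ≤ L →
      evnorm (reluNet d W' x h - reluNet d W x h) ≤ (s + ε) ^ h - s ^ h) ∧
    evnorm (Matrix.vecMul (reluNet d W' x L) (W' L) -
        Matrix.vecMul (reluNet d W x L) (W L)) ≤ (s + ε) ^ (L + 1) - s ^ (L + 1) := by
  have key : ∀ h, h ≤ L → evnorm (reluNet d W x h) ≤ s ^ h ∧
      evnorm (reluNet d W' x h - reluNet d W x h) ≤ (s + ε) ^ h - s ^ h := by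
    intro h
    induction h with
    | zero =>
      intro _
      refine ⟨by simpa [reluNet] using hx, ?_⟩
      simp [reluNet, evnorm]
    | succ h ih =>
      intro hh
      obtain ⟨h1, h2⟩ := ih (by omega)
      constructor
      · refine (evnorm_mono _ (Matrix.vecMul (reluNet d W x h) (W h)) ?_).trans ?_
        · intro i
          simp only [reluNet]
          rw [abs_of_nonneg (le_max_right _ _)]
          exact max_le (le_abs_self _) (abs_nonneg _)
        · rw [pow_succ']
          exact (evnorm_vecMul_le _ _).trans
            (mul_le_mul (hW h (by omega)) h1 (evnorm_nonneg' _) hs.le)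
      · refine (evnorm_mono _ (Matrix.vecMul (reluNet d W' x h) (W' h) -
          Matrix.vecMul (reluNet d W x h) (W h)) ?_).trans
          (evnorm_step _ _ _ _ s ε hs hε (hW h (by omega)) (hW' h (by omega)) h h1 h2)
        intro i
        simp only [reluNet, Pi.sub_apply]
        exact abs_max_sub_max_le_abs _ _ _
  refine ⟨fun h _ hh => (key h hh).2, ?_⟩
  exact evnorm_step _ _ _ _ s ε hs hε (hW L le_rfl) (hW' L le_rfl) L
    (key L le_rfl).1 (key L le_rfl).2
end

section
/- Fix L ≥ 1, weight matrices W^1, …, W^{L+1} and perturbed weight matrices W̃^1, …, W̃^{L+1} of the same sizes, and real numbers s ≥ 1 and ε ≥ 0 with ‖W^h‖₂ ≤ s, ‖W̃^h − W^h‖₂ ≤ ε for every h, and ε ≤ 1/(L·s^L). Let x be an input row vector with ‖x‖ ≤ 1, let g^h(x) denote the layers of the ReLU network with weights W^1,…,W^{L+1} (with g^{L+1}(x) := f(x) the output), and g̃^h(x) the layers of the perturbed network. Then for every h with 1 ≤ h ≤ L+1, ‖g̃^h(x) − g^h(x)‖ ≤ e² · h / (L · s^{L+1−h}), where e is Euler's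 number. (This is the s ≥ 1 case of Lemma 1 with an explicit constant.) -/
open scoped Matrix.Norms.L2Operator in
lemma aux_specNorm_eq {m n : ℕ} (A : Matrix (Fin m) (Fin n) ℝ) : specNorm A = ‖A‖ := by
  rw [Matrix.l2_opNorm_def]; rfl

open scoped Matrix.Norms.L2Operator in
lemma aux_vecMul {m n : ℕ} (A : Matrix (Fin m) (Fin n) ℝ) (v : Fin m → ℝ) :
    evnorm (Matrix.vecMul v A) ≤ evnorm v * specNorm A := by
  rw [aux_specNorm_eq, ← Matrix.mulVec_transpose, mul_comm]
  have h := Matrix.l2_opNorm_mulVec A.transpose (WithLp.toLp 2 v)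
  have h2 : ‖A.transpose‖ = ‖A‖ := by
    have := Matrix.l2_opNorm_conjTranspose A
    rwa [Matrix.conjTranspose_eq_transpose_of_trivial] at this
  rw [h2] at h
  exact h

lemma aux_add {n : ℕ} (u v : Fin n → ℝ) : evnorm (u + v) ≤ evnorm u + evnorm v :=
  norm_add_le (WithLp.toLp 2 u) (WithLp.toLp 2 v)

lemma aux_nonneg {n : ℕ} (u : Fin n → ℝ) : 0 ≤ evnorm u := norm_nonneg _

lemma aux_snonneg {m n : ℕ} (A : Matrix (Fin m) (Fin n) ℝ) : 0 ≤ specNorm A := norm_nonneg _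

lemma aux_mono {n : ℕ} (u v : Fin n → ℝ) (h : ∀ i, |u i| ≤ |v i|) : evnorm u ≤ evnorm v := by
  have e : ∀ w : Fin n → ℝ, evnorm w = √(∑ i, |w i| ^ 2) := fun w =>
    EuclideanSpace.norm_eq (WithLp.toLp 2 w)
  rw [e, e]
  apply Real.sqrt_le_sqrt
  apply Finset.sum_le_sum
  intro i _
  exact pow_le_pow_left₀ (abs_nonneg _) (h i) 2

lemma aux_growth (d : ℕ → ℕ) (W : ∀ h : ℕ, Matrix (Fin (d h)) (Fin (d (h + 1))) ℝ)
    (L : ℕ) (s : ℝ) (hs : 1 ≤ s) (hW : ∀ h, h ≤ L → specNorm (W h) ≤ s)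
    (x : Fin (d 0) → ℝ) (hx : evnorm x ≤ 1) :
    ∀ h, h ≤ L → evnorm (reluNet d W x h) ≤ s ^ h := by
  intro h
  induction h with
  | zero => intro _; simpa [reluNet] using hx
  | succ k ih =>
    intro hk
    have h1 : evnorm (reluNet d W x (k+1)) ≤ evnorm (Matrix.vecMul (reluNet d W x k) (W k)) := by
      apply aux_mono
      intro i
      simp only [reluNet]
      rw [abs_of_nonneg (le_max_right _ _)]
      exact max_le (le_abs_self _) (abs_nonneg _)
    refine h1.trans ((aux_vecMul _ _).trans ?_)
    rw [pow_succ]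
    exact mul_le_mul (ih (by omega)) (hW k (by omega)) (aux_snonneg _) (by positivity)

lemma aux_step {m n : ℕ} (A A' : Matrix (Fin m) (Fin n) ℝ) (g g' : Fin m → ℝ) (s ε : ℝ) (k : ℕ)
    (hs : 1 ≤ s) (hε : 0 ≤ ε) (hA : specNorm A ≤ s) (hA' : specNorm (A' - A) ≤ ε)
    (hg : evnorm g ≤ s ^ k) (hd : evnorm (g' - g) ≤ (s + ε) ^ k - s ^ k) :
    evnorm (Matrix.vecMul g' A' - Matrix.vecMul g A) ≤ (s + ε) ^ (k+1) - s ^ (k+1) := by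
  have e : Matrix.vecMul g' A' - Matrix.vecMul g A =
      (Matrix.vecMul (g' - g) A + Matrix.vecMul (g' - g) (A' - A)) + Matrix.vecMul g (A' - A) := by
    simp only [Matrix.sub_vecMul, Matrix.vecMul_sub]
    abel
  rw [e]
  have h1 := (aux_vecMul A (g' - g)).trans
    (mul_le_mul hd hA (aux_snonneg _) ((aux_nonneg _).trans hd))
  have h2 := (aux_vecMul (A' - A) (g' - g)).trans
    (mul_le_mul hd hA' (aux_snonneg _) ((aux_nonneg _).trans hd))
  have h3 := (aux_vecMul (A' - A) g).trans
    (mul_le_mul hg hA' (aux_snonneg _) (by positivity))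
  refine (aux_add _ _).trans ((add_le_add ((aux_add _ _).trans (add_le_add h1 h2)) h3).trans
    (le_of_eq ?_))
  ring

lemma aux_diff (d : ℕ → ℕ) (W W' : ∀ h : ℕ, Matrix (Fin (d h)) (Fin (d (h + 1))) ℝ)
    (L : ℕ) (s ε : ℝ) (hs : 1 ≤ s) (hε : 0 ≤ ε) (hW : ∀ h, h ≤ L → specNorm (W h) ≤ s)
    (hW' : ∀ h, h ≤ L → specNorm (W' h - W h) ≤ ε)
    (x : Fin (d 0) → ℝ) (hx : evnorm x ≤ 1) :
    ∀ h, h ≤ L → evnorm (reluNet d W' x h - reluNet d W x h) ≤ (s + ε) ^ h - s ^ h := by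
  intro h
  induction h with
  | zero => intro _; simp [reluNet, evnorm]
  | succ k ih =>
    intro hk
    refine le_trans (aux_mono _ _ ?_) (aux_step (W k) (W' k) _ _ s ε k hs hε (hW k (by omega))
      (hW' k (by omega)) (aux_growth d W L s hs hW x hx k (by omega)) (ih (by omega)))
    intro i
    exact abs_max_sub_max_le_abs _ _ _

lemma aux_pow (s ε : ℝ) (hs : 1 ≤ s) (hε : 0 ≤ ε) (k : ℕ) :
    (s + ε) ^ (k+1) - s ^ (k+1) ≤ (k + 1) * ε * (s + ε) ^ k := by
  induction k with
  | zero => simp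
  | succ k ih =>
    have h1 : s ^ (k+1) ≤ (s + ε) ^ (k+1) := pow_le_pow_left₀ (by linarith) (by linarith) _
    have h2 := mul_le_mul_of_nonneg_right ih (by linarith : 0 ≤ s + ε)
    have h3 := mul_le_mul_of_nonneg_left h1 hε
    push_cast
    calc _ = ((s + ε) ^ (k+1) - s ^ (k+1)) * (s + ε) + ε * s ^ (k+1) := by ring
      _ ≤ (k + 1) * ε * (s + ε) ^ k * (s + ε) + ε * (s + ε) ^ (k+1) := add_le_add h2 h3
      _ = _ := by ring

lemma aux_final (L : ℕ) (hL : 1 ≤ L) (s ε : ℝ) (hs : 1 ≤ s) (hε : 0 ≤ ε)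
    (hεs : ε ≤ 1 / (L * s ^ L)) (k : ℕ) (hk : k ≤ L) :
    (s + ε) ^ (k+1) - s ^ (k+1) ≤ Real.exp 1 ^ 2 * ((k : ℝ) + 1) / (L * s ^ (L - k)) := by
  have hL' : (0:ℝ) < L := by exact_mod_cast hL
  have hs0 : 0 < s := by linarith
  have h1 : ε ≤ s * (1 / L) := by
    have : 1 / (L * s ^ L) ≤ 1 / (L:ℝ) :=
      one_div_le_one_div_of_le hL' (le_mul_of_one_le_right hL'.le (one_le_pow₀ hs))
    have h0 : (0:ℝ) ≤ 1 / L := by positivity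
    nlinarith
  have h2 : s + ε ≤ s * Real.exp (1 / L) := by
    have := Real.add_one_le_exp (1 / (L:ℝ))
    nlinarith
  have h3 : (s + ε) ^ k ≤ s ^ k * Real.exp 1 := by
    refine (pow_le_pow_left₀ (by linarith) h2 k).trans ?_
    rw [mul_pow, ← Real.exp_nat_mul]
    gcongr
    rw [mul_one_div, div_le_one hL']
    exact_mod_cast hk
  have h4 : Real.exp 1 ≤ Real.exp 1 ^ 2 := by
    have : (1:ℝ) ≤ Real.exp 1 := Real.one_le_exp (by norm_num)
    nlinarith
  refine (aux_pow s ε hs hε k).trans ?_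
  calc ((k:ℝ) + 1) * ε * (s + ε) ^ k
      ≤ (k + 1) * (1 / (L * s ^ L)) * (s ^ k * Real.exp 1 ^ 2) := by
        gcongr
        exact h3.trans (by gcongr)
    _ = _ := by
        have : s ^ L = s ^ (L - k) * s ^ k := by rw [← pow_add]; congr 1; omega
        rw [this]
        field_simp

/-- **Lemma 1 (case `s ≥ 1`, explicit constant).** If every weight matrix has spectral
norm at most `s ≥ 1`, every weight perturbation has spectral norm at most
`ε ≤ 1/(L·s^L)`, and `‖x‖ ≤ 1`, then every hidden activation of the perturbed ReLU
network deviates from the unperturbed one by at most `e²·h/(L·s^{L+1−h})`, and the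
network outputs (`g^{L+1} = f`) deviate by at most `e²·(L+1)/L`. -/
theorem relu_net_perturbation_bound_s_ge_one
    (L : ℕ) (hL : 1 ≤ L) (d : ℕ → ℕ)
    (W W' : ∀ h : ℕ, Matrix (Fin (d h)) (Fin (d (h + 1))) ℝ)
    (s ε : ℝ) (hs : 1 ≤ s) (hε : 0 ≤ ε) (hεs : ε ≤ 1 / (L * s ^ L))
    (hW : ∀ h, h ≤ L → specNorm (W h) ≤ s)
    (hW' : ∀ h, h ≤ L → specNorm (W' h - W h) ≤ ε)
    (x : Fin (d 0) → ℝ) (hx : evnorm x ≤ 1) :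
    (∀ h, 1 ≤ h → h ≤ L →
      evnorm (reluNet d W' x h - reluNet d W x h) ≤
        Real.exp 1 ^ 2 * h / (L * s ^ (L + 1 - h))) ∧
    evnorm (Matrix.vecMul (reluNet d W' x L) (W' L) -
        Matrix.vecMul (reluNet d W x L) (W L)) ≤
      Real.exp 1 ^ 2 * (L + 1) / (L * s ^ (L + 1 - (L + 1))) := by
  refine ⟨?_, ?_⟩
  · intro h h1 hh
    obtain ⟨k, rfl⟩ : ∃ k, h = k + 1 := ⟨h - 1, by omega⟩
    refine (aux_diff d W W' L s ε hs hε hW hW' x hx (k+1) hh).trans ?_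
    have := aux_final L hL s ε hs hε hεs k (by omega)
    rw [show L + 1 - (k + 1) = L - k by omega]
    push_cast
    exact this
  · refine (aux_step (W L) (W' L) _ _ s ε L hs hε (hW L le_rfl) (hW' L le_rfl)
      (aux_growth d W L s hs hW x hx L le_rfl)
      (aux_diff d W W' L s ε hs hε hW hW' x hx L le_rfl)).trans ?_
    have := aux_final L hL s ε hs hε hεs L le_rfl
    rw [show L + 1 - (L + 1) = L - L by omega]
    exact this
end

section
/- Let E : ℝ^P → ℝ be continuously differentiable, let θ : ℝ → ℝ^P be a differentiable curve with θ'(t) = −∇E(θ(t)) for all t, let L be a natural number, K ≥ 0, T ≥ 0, and suppose that ‖∇E(θ(t)) − ∇E(θ(0))‖ ≤ K·t^{L+1} for all t ∈ [0, T]. Then the deviation of E(θ(T)) from its first-order (one-step) surrogate E(θ(0)) − T·‖∇E(θ(0))‖² satisfies | E(θ(T)) − E(θ(0)) + T·‖∇E(θ(0))‖² | ≤ (2K‖∇E(θ(0))‖/(L+2))·T^{L+2} + (K²/(2L+3))·T^{2L+3}. (This is the precise quantitative mechanism behind Theorem 5's bound error(T) ≤ O(T^{2L+3}) on the difference between the regularized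 meta-objective Ẽ(T, f_θ) and the closed-form meta-objective Ē(T, f_θ): along the gradient flow, E(θ(T)) = E(θ(0)) − ∫₀^T ‖∇E(θ(t))‖² dt, and the gradient along the flow of an L-hidden-layer network deviates from its initial value by at most K·t^{L+1}.) -/
/-- **Quantitative mechanism behind Theorem 5.** If `θ` is a gradient flow of a
continuously differentiable `E` and the gradient along the flow deviates from its initial
value by at most `K·t^{L+1}` on `[0, T]`, then the deviation of `E(θ(T))` from its
one-step surrogate `E(θ(0)) − T·‖∇E(θ(0))‖²` is at most
`(2K‖∇E(θ(0))‖/(L+2))·T^{L+2} + (K²/(2L+3))·T^{2L+3}`. -/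
theorem gradient_flow_surrogate_error_bound
    {P : ℕ} (E : EuclideanSpace ℝ (Fin P) → ℝ) (hE : ContDiff ℝ 1 E)
    (θ : ℝ → EuclideanSpace ℝ (Fin P))
    (hθ : ∀ t : ℝ, HasDerivAt θ (-(gradient E (θ t))) t)
    (L : ℕ) (K T : ℝ) (hK : 0 ≤ K) (hT : 0 ≤ T)
    (hdev : ∀ t ∈ Set.Icc (0 : ℝ) T,
      ‖gradient E (θ t) - gradient E (θ 0)‖ ≤ K * t ^ (L + 1)) :
    |E (θ T) - E (θ 0) + T * ‖gradient E (θ 0)‖ ^ 2| ≤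
      (2 * K * ‖gradient E (θ 0)‖ / ((L : ℝ) + 2)) * T ^ (L + 2) +
        (K ^ 2 / (2 * (L : ℝ) + 3)) * T ^ (2 * L + 3) := by
  set g : ℝ → EuclideanSpace ℝ (Fin P) := fun t => gradient E (θ t) with hg
  have hd : ∀ t : ℝ, HasDerivAt (fun t => E (θ t) - E (θ 0) + t * ‖g 0‖ ^ 2)
      (-‖g t‖ ^ 2 + ‖g 0‖ ^ 2) t := by
    intro t
    have h1 : HasGradientAt E (g t) (θ t) :=
      ((hE.differentiable one_ne_zero) (θ t)).hasGradientAt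
    have h2 := h1.hasFDerivAt.comp_hasDerivAt t (hθ t)
    have h3 : HasDerivAt (fun t => E (θ t)) (-‖g t‖ ^ 2) t := by
      refine HasDerivAt.congr_deriv h2 ?_
      change inner ℝ (g t) (-(g t)) = _
      rw [inner_neg_right, real_inner_self_eq_norm_sq]
    have h4 := (h3.sub_const (E (θ 0))).add ((hasDerivAt_id t).mul_const (‖g 0‖ ^ 2))
    exact HasDerivAt.congr_deriv h4 (by ring)
  have hB : ∀ t : ℝ, HasDerivAt (fun t : ℝ => (2 * K * ‖g 0‖ / ((L : ℝ) + 2)) * t ^ (L + 2) +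
        (K ^ 2 / (2 * (L : ℝ) + 3)) * t ^ (2 * L + 3))
      (2 * K * ‖g 0‖ * t ^ (L + 1) + K ^ 2 * t ^ (2 * L + 2)) t := by
    intro t
    have h := ((hasDerivAt_pow (L + 2) t).const_mul (2 * K * ‖g 0‖ / ((L : ℝ) + 2))).add
      ((hasDerivAt_pow (2 * L + 3) t).const_mul (K ^ 2 / (2 * (L : ℝ) + 3)))
    refine h.congr_deriv ?_
    have e1 : (L : ℝ) + 2 ≠ 0 := by positivity
    have e2 : 2 * (L : ℝ) + 3 ≠ 0 := by positivity
    rw [show L + 2 - 1 = L + 1 by omega, show 2 * L + 3 - 1 = 2 * L + 2 by omega]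
    push_cast
    field_simp
  have key := image_norm_le_of_norm_deriv_right_le_deriv_boundary (a := 0) (b := T)
    (fun t _ => (hd t).continuousAt.continuousWithinAt)
    (fun t _ => (hd t).hasDerivWithinAt) (by simp) hB (by
      intro t ht
      have h := hdev t ⟨ht.1, ht.2.le⟩
      change ‖g t - g 0‖ ≤ _ at h
      have h5 := (abs_norm_sub_norm_le (g t) (g 0)).trans h
      have e : K ^ 2 * t ^ (2 * L + 2) = (K * t ^ (L + 1)) ^ 2 := by ring
      rw [e, Real.norm_eq_abs]
      have hn := norm_nonneg (g t)
      have hn0 := norm_nonneg (g 0)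
      generalize hD : K * t ^ (L + 1) = D at *
      have e' : 2 * K * ‖g 0‖ * t ^ (L + 1) = 2 * ‖g 0‖ * D := by rw [← hD]; ring
      rw [e']
      obtain ⟨ha, hb⟩ := abs_le.1 h5
      have : 0 ≤ D := (abs_nonneg _).trans h5
      rw [abs_le]
      constructor <;> nlinarith)
  exact key ⟨hT, le_rfl⟩
end

section
/- Let E : ℝ^P → ℝ be differentiable with K-Lipschitz gradient, i.e., ‖∇E(a) − ∇E(b)‖ ≤ K‖a − b‖ for all a, b ∈ ℝ^P with K > 0, let α > 0, θ_0 ∈ ℝ^P, and define the gradient-descent iterates θ_{i+1} = θ_i − α∇E(θ_i) for i ≥ 0. Then for every i ≥ 0: (i) ‖∇E(θ_i)‖ ≤ (1 + αK)^i · ‖∇E(θ_0)‖; (ii) ‖∇E(θ_i) − ∇E(θ_0)‖ ≤ ((1 + αK)^i − 1) · ‖∇E(θ_0)‖; and consequently (iii) for every k ≥ 1, | ∑_{i=0}^{k−1} ⟨∇E(θ_i), ∇E(θ_0)⟩ − k·‖∇E(θ_0)‖² | ≤ ‖∇E(θ_0)‖² · ∑_{i=0}^{k−1} ((1 + αK)^i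 − 1). (This quantifies the mechanism behind Theorems 3 and 4: the k-step MAML surrogate objective M_k, whose correction terms are β_i = α⟨∇E(θ_i), ∇E(θ_0)⟩, is close to the regularized objective Ẽ(kα, ·), whose correction term is kα‖∇E(θ_0)‖², whenever the step size α is small.) -/
open scoped RealInnerProductSpace

/-- **Mechanism behind Theorems 3 and 4.** For gradient descent `θ_{i+1} = θ_i − α∇E(θ_i)`
on a function `E` with `K`-Lipschitz gradient: (i) `‖∇E(θ_i)‖ ≤ (1+αK)^i ‖∇E(θ_0)‖`;
(ii) `‖∇E(θ_i) − ∇E(θ_0)‖ ≤ ((1+αK)^i − 1)·‖∇E(θ_0)‖`; and (iii) the sum of inner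
products `∑_{i<k} ⟪∇E(θ_i), ∇E(θ_0)⟫` deviates from `k·‖∇E(θ_0)‖²` by at most
`‖∇E(θ_0)‖²·∑_{i<k} ((1+αK)^i − 1)`. -/
theorem gradient_descent_inner_product_bounds
    {P : ℕ} (E : EuclideanSpace ℝ (Fin P) → ℝ)
    (hdiff : Differentiable ℝ E) (K : ℝ) (hK : 0 < K)
    (hLip : ∀ a b : EuclideanSpace ℝ (Fin P),
      ‖gradient E a - gradient E b‖ ≤ K * ‖a - b‖)
    (α : ℝ) (hα : 0 < α)
    (θ : ℕ → EuclideanSpace ℝ (Fin P))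
    (hiter : ∀ i : ℕ, θ (i + 1) = θ i - α • gradient E (θ i)) :
    (∀ i : ℕ, ‖gradient E (θ i)‖ ≤ (1 + α * K) ^ i * ‖gradient E (θ 0)‖) ∧
    (∀ i : ℕ, ‖gradient E (θ i) - gradient E (θ 0)‖ ≤
      ((1 + α * K) ^ i - 1) * ‖gradient E (θ 0)‖) ∧
    ∀ k : ℕ, 1 ≤ k →
      |(∑ i ∈ Finset.range k, ⟪gradient E (θ i), gradient E (θ 0)⟫) -
          k * ‖gradient E (θ 0)‖ ^ 2| ≤
        ‖gradient E (θ 0)‖ ^ 2 * ∑ i ∈ Finset.range k, ((1 + α * K) ^ i - 1) := by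
  have hstep : ∀ i : ℕ, ‖gradient E (θ (i + 1)) - gradient E (θ i)‖ ≤
      α * K * ‖gradient E (θ i)‖ := by
    intro i
    have h := hLip (θ (i + 1)) (θ i)
    have h2 : ‖θ (i + 1) - θ i‖ = α * ‖gradient E (θ i)‖ := by
      rw [hiter i, sub_sub_cancel_left, norm_neg, norm_smul, Real.norm_of_nonneg hα.le]
    rw [h2] at h
    linarith
  have hαK : 0 < α * K := mul_pos hα hK
  have h1 : ∀ i : ℕ, ‖gradient E (θ i)‖ ≤ (1 + α * K) ^ i * ‖gradient E (θ 0)‖ := by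
    intro i
    induction i with
    | zero => simp
    | succ n ih =>
      have h3 := norm_sub_norm_le (gradient E (θ (n + 1))) (gradient E (θ n))
      have h4 := hstep n
      have h5 := mul_le_mul_of_nonneg_left ih (by linarith : 0 ≤ 1 + α * K)
      rw [pow_succ]
      linarith
  have h2 : ∀ i : ℕ, ‖gradient E (θ i) - gradient E (θ 0)‖ ≤
      ((1 + α * K) ^ i - 1) * ‖gradient E (θ 0)‖ := by
    intro i
    induction i with
    | zero => simp
    | succ n ih =>
      have h3 := norm_sub_le_norm_sub_add_norm_sub
        (gradient E (θ (n + 1))) (gradient E (θ n)) (gradient E (θ 0))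
      have h4 := hstep n
      have h5 := mul_le_mul_of_nonneg_left (h1 n) hαK.le
      rw [pow_succ]
      linarith
  refine ⟨h1, h2, ?_⟩
  intro k _
  have h3 : (∑ i ∈ Finset.range k, ⟪gradient E (θ i), gradient E (θ 0)⟫) -
      k * ‖gradient E (θ 0)‖ ^ 2 =
      ∑ i ∈ Finset.range k, ⟪gradient E (θ i) - gradient E (θ 0), gradient E (θ 0)⟫ := by
    simp only [inner_sub_left, Finset.sum_sub_distrib, real_inner_self_eq_norm_sq, Finset.sum_const,
      Finset.card_range, nsmul_eq_mul]
  rw [h3, Finset.mul_sum]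
  refine (Finset.abs_sum_le_sum_abs _ _).trans (Finset.sum_le_sum fun i _ => ?_)
  have h4 := abs_real_inner_le_norm (gradient E (θ i) - gradient E (θ 0)) (gradient E (θ 0))
  have h5 := mul_le_mul_of_nonneg_right (h2 i) (norm_nonneg (gradient E (θ 0)))
  linarith
end
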